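/- Let m ≥ 1 and let q be a nonzero integer. If the Baumslag–Solitar group BS(m, m·q) is residually finite, then m = 1 or |q| = 1. -/

import Mathlib

/-!
Suppose `m > 1` and `|q| > 1`, and put `y = x ^ m`, so that `t⁻¹ y t = y ^ q` in `BS(m, m q)`.

In a finite group, `y` and its conjugate `y ^ q` have the same order, hence generate the same
cyclic subgroup; so `t y t⁻¹` is a power of `y`, hence of `x`, and commutes with `x`
(`conj_mem_zpowers_of_finite`). Thus the commutator of `t x ^ m t⁻¹` and `x` dies in every
finite quotient.

That commutator is nontrivial in `BS(m, m q)`: the group maps to the HNN extension of `ℤ` with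
`t x ^ (m q) t⁻¹ = x ^ m`, where the commutator becomes the word
`t x ^ m t⁻¹ x t x ^ (-m) t⁻¹ x⁻¹`. This word is reduced, because `m q ∤ m` and `m ∤ 1`, so
Britton's lemma applies (`bsWord_ne_one`).
-/

/-- The single relator of the Baumslag–Solitar group `BS(m,n)`:
`t⁻¹ x^m t x^{-n}`, where `x = FreeGroup.of true` and `t = FreeGroup.of false`. -/
def bsRels (m n : ℤ) : Set (FreeGroup Bool) :=
  {(FreeGroup.of false)⁻¹ * (FreeGroup.of true) ^ m * FreeGroup.of false *
    (FreeGroup.of true) ^ (-n)}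

/-- The Baumslag–Solitar group `BS(m,n) = ⟨x, t ∣ t⁻¹ x^m t = x^n⟩`. -/
def BS (m n : ℤ) : Type := PresentedGroup (bsRels m n)

instance (m n : ℤ) : Group (BS m n) := by unfold BS; infer_instance

/-- The image of the generator `x` in `BS(m,n)`. -/
def BS.x (m n : ℤ) : BS m n := PresentedGroup.of (rels := bsRels m n) true

/-- The image of the generator `t` in `BS(m,n)`. -/
def BS.t (m n : ℤ) : BS m n := PresentedGroup.of (rels := bsRels m n) false

/-- A group is residually finite if every nontrivial element is detected by a
homomorphism to a finite group. -/
def IsResiduallyFinite (G : Type*) [Group G] : Prop :=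
  ∀ g : G, g ≠ 1 → ∃ (H : Type) (_ : Group H) (_ : Finite H) (f : G →* H), f g ≠ 1

/-- In a finite group, a relation `t⁻¹ y t = y ^ q` also puts `t y t⁻¹` in `⟨y⟩`: the
elements `y ^ q` and `y` are conjugate, so `⟨y ^ q⟩` and `⟨y⟩` have the
same finite order and coincide. -/
lemma conj_mem_zpowers_of_finite {H : Type*} [Group H] [Finite H] (y t : H) (q : ℤ)
    (h : t⁻¹ * y * t = y ^ q) : t * y * t⁻¹ ∈ Subgroup.zpowers y := by
  have hle : Subgroup.zpowers (y ^ q) ≤ Subgroup.zpowers y := by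
    rw [Subgroup.zpowers_le]
    exact ⟨q, rfl⟩
  have hord : orderOf (y ^ q) = orderOf y := by
    have h' : y ^ q = MulAut.conj t⁻¹ y := by simp [← h]
    rw [h', MulEquiv.orderOf_eq]
  have heq : Subgroup.zpowers (y ^ q) = Subgroup.zpowers y :=
    Subgroup.eq_of_le_of_card_ge hle (by rw [Nat.card_zpowers, Nat.card_zpowers, hord])
  obtain ⟨k, hk⟩ : y ∈ Subgroup.zpowers (y ^ q) := heq ▸ Subgroup.mem_zpowers y
  refine ⟨k, ?_⟩
  have hk' : (t⁻¹ * y * t) ^ k = y := by rw [h]; exact hk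
  have hconj : (t⁻¹ * y * t) ^ k = t⁻¹ * y ^ k * t := by
    simpa using conj_zpow (i := k) (a := t⁻¹) (b := y)
  rw [hconj] at hk'
  change y ^ k = _
  conv_rhs => rw [← hk']
  group

/-- The endomorphism `x ↦ x ^ k` of the infinite cyclic group. -/
def powHom (k : ℤ) : Multiplicative ℤ →* Multiplicative ℤ := zpowGroupHom k

lemma mem_range_powHom {k a : ℤ} :
    Multiplicative.ofAdd a ∈ (powHom k).range ↔ k ∣ a := by
  constructor
  · rintro ⟨b, hb⟩
    refine ⟨b.toAdd, ?_⟩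
    have := congrArg Multiplicative.toAdd hb
    simpa [powHom] using this.symm
  · rintro ⟨b, rfl⟩
    exact ⟨Multiplicative.ofAdd b, Multiplicative.toAdd.injective (by simp [powHom, mul_comm])⟩

lemma powHom_injective {k : ℤ} (hk : k ≠ 0) : Function.Injective (powHom k) := by
  intro a b h
  have := congrArg Multiplicative.toAdd h
  simpa [powHom, hk] using this

/-- The isomorphism `n ℤ ≃ m ℤ` sending `n` to `m`, through `ℤ`. -/
noncomputable def bsIso {m n : ℤ} (hm : m ≠ 0) (hn : n ≠ 0) :
    (powHom n).range ≃* (powHom m).range :=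
  (MonoidHom.ofInjective (powHom_injective hn)).symm.trans
    (MonoidHom.ofInjective (powHom_injective hm))

/-- `BS(m, n)` realized as an HNN extension of `ℤ`: the stable letter `t` satisfies
`t x ^ n t⁻¹ = x ^ m`, following Mathlib's convention that `t a t⁻¹ = φ a`. -/
abbrev BSHNN {m n : ℤ} (hm : m ≠ 0) (hn : n ≠ 0) : Type :=
  HNNExtension (Multiplicative ℤ) (powHom n).range (powHom m).range (bsIso hm hn)

lemma BSHNN_rel {m n : ℤ} (hm : m ≠ 0) (hn : n ≠ 0) :
    (HNNExtension.t : BSHNN hm hn) * HNNExtension.of (Multiplicative.ofAdd n) =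
      HNNExtension.of (Multiplicative.ofAdd m) * HNNExtension.t := by
  have hp (k : ℤ) : powHom k (Multiplicative.ofAdd 1) = Multiplicative.ofAdd k :=
    Multiplicative.toAdd.injective (by simp [powHom])
  have h := HNNExtension.t_mul_of (φ := bsIso hm hn)
    (MonoidHom.ofInjective (powHom_injective hn) (Multiplicative.ofAdd 1))
  rw [bsIso, MulEquiv.trans_apply, MulEquiv.symm_apply_apply, MonoidHom.ofInjective_apply,
    MonoidHom.ofInjective_apply, hp, hp] at h
  exact h

lemma BSHNN_of_zpow {m n : ℤ} (hm : m ≠ 0) (hn : n ≠ 0) (k : ℤ) :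
    (HNNExtension.of (Multiplicative.ofAdd 1) : BSHNN hm hn) ^ k =
      HNNExtension.of (Multiplicative.ofAdd k) := by
  rw [← map_zpow]
  exact congrArg _ (Multiplicative.toAdd.injective (by simp))

/-- The word `t x ^ m t⁻¹ x t x ^ (-m) t⁻¹ x⁻¹` is reduced, hence nontrivial by Britton's
lemma. -/
lemma bsWord_ne_one {m n : ℤ} (hm : m ≠ 0) (hn : n ≠ 0) (h1 : ¬ m ∣ 1) (hnm : ¬ n ∣ m)
    (x t : BSHNN hm hn) (hx : x = HNNExtension.of (Multiplicative.ofAdd 1))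
    (ht : t = HNNExtension.t) :
    t * x ^ m * t⁻¹ * x * (t * x ^ (-m) * t⁻¹ * x⁻¹) ≠ 1 := by
  intro h
  let w : HNNExtension.NormalWord.ReducedWord (Multiplicative ℤ)
      (powHom n).range (powHom m).range :=
    { head := 1
      toList := [(1, Multiplicative.ofAdd m), (-1, Multiplicative.ofAdd 1),
        (1, Multiplicative.ofAdd (-m)), (-1, Multiplicative.ofAdd (-1))]
      chain := by
        simp only [List.isChain_cons_cons, HNNExtension.toSubgroup_one,
          HNNExtension.toSubgroup_neg_one, mem_range_powHom, Int.dvd_neg]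
        simp [h1, hnm] }
  have hw : w.prod (bsIso hm hn) = 1 := by
    rw [← h, hx, ht, BSHNN_of_zpow, BSHNN_of_zpow]
    simp [w, HNNExtension.NormalWord.ReducedWord.prod, mul_assoc]
  have := HNNExtension.ReducedWord.toList_eq_nil_of_mem_of_range (φ := bsIso hm hn) w
    (hw ▸ one_mem _)
  simp [w] at this

lemma BS_rel (m n : ℤ) : (BS.t m n)⁻¹ * BS.x m n ^ m * BS.t m n = BS.x m n ^ n := by
  have h := PresentedGroup.one_of_mem (rels := bsRels m n) (Set.mem_singleton _)
  rw [map_mul, map_zpow, zpow_neg, mul_inv_eq_one] at h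
  exact h

/-- The homomorphism from `BS(m, n)` to the HNN extension sending `x` to the generator of `ℤ` and
`t` to the stable letter. -/
noncomputable def bsToHNN {m n : ℤ} (hm : m ≠ 0) (hn : n ≠ 0) : BS m n →* BSHNN hm hn :=
  PresentedGroup.toGroup (rels := bsRels m n)
    (f := fun b => if b then HNNExtension.of (Multiplicative.ofAdd 1) else HNNExtension.t) (by
      rintro r rfl
      have h := BSHNN_rel hm hn
      simp only [map_mul, map_inv, map_zpow, FreeGroup.lift_apply_of, if_true, zpow_neg,
        BSHNN_of_zpow, Bool.false_eq_true, if_false]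
      rw [mul_inv_eq_one, mul_assoc, ← h]
      group)

lemma bsToHNN_x {m n : ℤ} (hm : m ≠ 0) (hn : n ≠ 0) :
    bsToHNN hm hn (BS.x m n) = HNNExtension.of (Multiplicative.ofAdd 1) :=
  PresentedGroup.toGroup.of (rels := bsRels m n) _

lemma bsToHNN_t {m n : ℤ} (hm : m ≠ 0) (hn : n ≠ 0) :
    bsToHNN hm hn (BS.t m n) = HNNExtension.t :=
  PresentedGroup.toGroup.of (rels := bsRels m n) _

/-- If `m ≥ 1`, `q ≠ 0` and `BS(m, m·q)` is residually finite, then `m = 1` or `|q| = 1`. -/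
theorem bs_residuallyFinite_imp_of_dvd (m q : ℤ) (hm : 1 ≤ m) (hq : q ≠ 0)
    (hrf : IsResiduallyFinite (BS m (m * q))) : m = 1 ∨ |q| = 1 := by
  by_contra! hcon
  obtain ⟨hm1, hq1⟩ := hcon
  have hm0 : m ≠ 0 := by omega
  have hn0 : m * q ≠ 0 := mul_ne_zero hm0 hq
  have h1 : ¬ m ∣ 1 := fun h => hm1 (Int.eq_one_of_dvd_one (by omega) h)
  have hnm : ¬ m * q ∣ m := fun h => by
    have h' : m * q ∣ m * 1 := by simpa using h
    exact hq1 (Int.isUnit_iff_abs_eq.mp (isUnit_of_dvd_one (Int.dvd_of_mul_dvd_mul_left hm0 h')))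
  set x := BS.x m (m * q)
  set t := BS.t m (m * q)
  have hg : t * x ^ m * t⁻¹ * x * (t * x ^ (-m) * t⁻¹ * x⁻¹) ≠ 1 := fun h => by
    have h' := congrArg (bsToHNN hm0 hn0) h
    simp only [map_mul, map_inv, map_zpow, map_one] at h'
    exact bsWord_ne_one hm0 hn0 h1 hnm _ _ (bsToHNN_x hm0 hn0) (bsToHNN_t hm0 hn0) h'
  obtain ⟨H, _, _, f, hf⟩ := hrf _ hg
  apply hf
  have hrel : (f t)⁻¹ * f x ^ m * f t = (f x ^ m) ^ q := by
    rw [← zpow_mul]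
    simpa using congrArg f (BS_rel m (m * q))
  obtain ⟨k, hk⟩ := conj_mem_zpowers_of_finite _ _ _ hrel
  have hk : (f x ^ m) ^ k = f t * f x ^ m * (f t)⁻¹ := hk
  have hinv : f t * f x ^ (-m) * (f t)⁻¹ = (f t * f x ^ m * (f t)⁻¹)⁻¹ := by group
  simp only [map_mul, map_inv, map_zpow]
  -- Both factors of the commutator are now powers of `f x`.
  rw [hinv, ← hk]
  group
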